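/- Under the algorithmic setting and local assumptions below, the whole sequence {x^k} converges to x*, and {‖r(x^k)‖} converges to 0 with convergence order ρ := min{1 + τ, δ + q} > 1; more precisely, there exist a constant C > 0 and an index k₀ such that for all k ≥ k₀, ‖r(x^{k+1})‖ ≤ C·‖r(x^k)‖^ρ and ‖r(x^k)‖ → 0. -/

import Mathlib

open scoped RealInnerProductSpace
open Filter Metric

noncomputable section

/-- The convex subdifferential of `g` at `y`. -/
def subdiff {n : ℕ} (g : EuclideanSpace ℝ (Fin n) → ℝ) (y : EuclideanSpace ℝ (Fin n)) :
    Set (EuclideanSpace ℝ (Fin n)) :=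
  {v | ∀ z, g y + ⟪v, z - y⟫ ≤ g z}

/-- The proximity operator `prox_g(z)`, the (unique, for convex `g`) minimizer of
`y ↦ g y + (1/2)‖y − z‖²`. -/
noncomputable def proxPt {n : ℕ} (g : EuclideanSpace ℝ (Fin n) → ℝ)
    (z : EuclideanSpace ℝ (Fin n)) : EuclideanSpace ℝ (Fin n) :=
  Classical.epsilon fun p => ∀ y, g p + (1 / 2) * ‖p - z‖ ^ 2 ≤ g y + (1 / 2) * ‖y - z‖ ^ 2

/-- The residual (prox-gradient) mapping `r(x) = x − prox_φ(x − ∇f(x))`. -/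
noncomputable def resid {n : ℕ} (f φ : EuclideanSpace ℝ (Fin n) → ℝ)
    (x : EuclideanSpace ℝ (Fin n)) : EuclideanSpace ℝ (Fin n) :=
  x - proxPt φ (x - gradient f x)

/-- The smallest eigenvalue of a symmetric operator on ℝᵐ, as the infimum of its quadratic
form over the unit sphere. -/
noncomputable def lambdaMin {m : ℕ} (T : EuclideanSpace ℝ (Fin m) →L[ℝ] EuclideanSpace ℝ (Fin m)) :
    ℝ :=
  ⨅ u : {u : EuclideanSpace ℝ (Fin m) // ‖u‖ = 1}, ⟪T u.1, u.1⟫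

/-!
Along indices in `K` the regularization parameter is comparable to `‖r(xᵏ)‖ ^ δ`. Comparing the
trial point with an almost nearest point of `X*`, strong monotonicity of the regularized
subproblem and the error bound make the trial step `O(‖r(xᵏ)‖ ^ q)` near `x*`. A Taylor expansion
then bounds the residual at the trial point by `O(‖r(xᵏ)‖ ^ min {1 + τ, δ + q})`, and since the
third-order Taylor error is dominated by the regularization term of the predicted reduction, the
step is accepted. Hence near `x*` the next index again lies in `K`, and
`‖xᵏ - x*‖ + C * ‖r(xᵏ)‖ ^ q` decreases for a suitable `C`; this keeps all later iterates near `x*`.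

The local estimates are stated asymptotically: they hold along any filter finer than
`comap x (𝓝 x*) ⊓ 𝓟 K`, and the Lyapunov function shows that `atTop` is such a filter.
-/

open Asymptotics Topology NNReal

section Prox

variable {n : ℕ} {f φ : EuclideanSpace ℝ (Fin n) → ℝ}

theorem exists_forall_add_half_norm_sub_sq_le {E : Type*} [NormedAddCommGroup E]
    [NormedSpace ℝ E] [FiniteDimensional ℝ E] {φ : E → ℝ} (hφ : ConvexOn ℝ Set.univ φ) (z : E) :
    ∃ p, ∀ y, φ p + (1 / 2) * ‖p - z‖ ^ 2 ≤ φ y + (1 / 2) * ‖y - z‖ ^ 2 := by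
  have := FiniteDimensional.proper_real E
  have hcont : Continuous φ := continuousOn_univ.1 (hφ.continuousOn isOpen_univ)
  obtain ⟨l, c, hle, hz⟩ := hφ.exists_affine_le_of_lt (𝕜 := ℝ) (Set.mem_univ z)
    (sub_one_lt (φ z)) isClosed_univ (hcont.lowerSemicontinuous.lowerSemicontinuousOn _)
  simp only [RCLike.re_to_real] at hz
  refine Continuous.exists_forall_le_of_isBounded (by fun_prop) z
    (isBounded_closedBall (x := z) (r := 2 * (‖l‖ + 1)) |>.subset fun y hy => ?_)
  have hly : l y + c ≤ φ y := hle ⟨y, Set.mem_univ y⟩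
  have hlyz : l z - l y ≤ ‖l‖ * ‖y - z‖ := by
    rw [← map_sub, norm_sub_rev]
    exact (le_abs_self _).trans (l.le_opNorm _)
  simp only [Set.mem_ofPred_eq, sub_self, norm_zero] at hy
  rw [mem_closedBall, dist_eq_norm]
  by_contra! h
  nlinarith [norm_nonneg l]

theorem proxPt_spec (hφ : ConvexOn ℝ Set.univ φ) (z y : EuclideanSpace ℝ (Fin n)) :
    φ (proxPt φ z) + (1 / 2) * ‖proxPt φ z - z‖ ^ 2 ≤ φ y + (1 / 2) * ‖y - z‖ ^ 2 :=
  Classical.epsilon_spec (exists_forall_add_half_norm_sub_sq_le hφ z) y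

theorem sub_proxPt_mem_subdiff (hφ : ConvexOn ℝ Set.univ φ) (z : EuclideanSpace ℝ (Fin n)) :
    z - proxPt φ z ∈ subdiff φ (proxPt φ z) := by
  intro y
  set p := proxPt φ z with hp
  -- Compare `p` with the points `p + s • (y - p)` of the segment towards `y` and let `s → 0`.
  have hsegment : ∀ s ∈ Set.Ioc (0 : ℝ) 1,
      φ p + ⟪z - p, y - p⟫ ≤ φ y + s * ((1 / 2) * ‖y - p‖ ^ 2) := by
    rintro s ⟨hs, hs1⟩
    have hmin := proxPt_spec hφ z (p + s • (y - p))
    have hconv := hφ.2 (Set.mem_univ p) (Set.mem_univ y) (sub_nonneg.2 hs1) hs.le (by ring)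
    rw [show (1 - s) • p + s • y = p + s • (y - p) by module, smul_eq_mul, smul_eq_mul] at hconv
    have hnorm : ‖p + s • (y - p) - z‖ ^ 2
        = ‖p - z‖ ^ 2 - 2 * s * ⟪z - p, y - p⟫ + s ^ 2 * ‖y - p‖ ^ 2 := by
      rw [show p + s • (y - p) - z = s • (y - p) - (z - p) by module, norm_sub_sq_real,
        real_inner_smul_left, real_inner_comm, norm_smul, mul_pow, Real.norm_eq_abs, sq_abs,
        norm_sub_rev z p]
      ring
    rw [← hp, hnorm] at hmin
    refine le_of_mul_le_mul_left ?_ hs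
    nlinarith
  have hlim : Tendsto (fun s : ℝ => φ y + s * ((1 / 2) * ‖y - p‖ ^ 2)) (𝓝[>] 0) (𝓝 (φ y)) := by
    refine tendsto_nhdsWithin_of_tendsto_nhds (Continuous.tendsto' (by fun_prop) _ _ (by simp))
  refine ge_of_tendsto hlim ?_
  filter_upwards [Ioc_mem_nhdsGT (zero_lt_one' ℝ)] with s hs using hsegment s hs

theorem inner_sub_sub_nonneg_of_mem_subdiff {p q u v : EuclideanSpace ℝ (Fin n)}
    (hu : u ∈ subdiff φ p) (hv : v ∈ subdiff φ q) : 0 ≤ ⟪u - v, p - q⟫ := by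
  have hpq := hu q
  have hqp := hv p
  rw [← neg_sub p q, inner_neg_right] at hpq
  rw [inner_sub_left]
  linarith

theorem norm_proxPt_sub_proxPt_le (hφ : ConvexOn ℝ Set.univ φ) (z w : EuclideanSpace ℝ (Fin n)) :
    ‖proxPt φ z - proxPt φ w‖ ≤ ‖z - w‖ := by
  have hmono := inner_sub_sub_nonneg_of_mem_subdiff (sub_proxPt_mem_subdiff hφ z)
    (sub_proxPt_mem_subdiff hφ w)
  rw [sub_sub_sub_comm, inner_sub_left, real_inner_self_eq_norm_sq] at hmono
  have hcs := real_inner_le_norm (z - w) (proxPt φ z - proxPt φ w)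
  by_contra! hlt
  nlinarith [norm_nonneg (z - w)]

theorem proxPt_add_eq_self (hφ : ConvexOn ℝ Set.univ φ) {x v : EuclideanSpace ℝ (Fin n)}
    (hv : v ∈ subdiff φ x) : proxPt φ (x + v) = x := by
  have hmono := inner_sub_sub_nonneg_of_mem_subdiff (sub_proxPt_mem_subdiff hφ (x + v)) hv
  rw [show x + v - proxPt φ (x + v) - v = -(proxPt φ (x + v) - x) by abel, inner_neg_left,
    real_inner_self_eq_norm_sq] at hmono
  rw [← sub_eq_zero, ← norm_eq_zero]
  nlinarith

theorem resid_eq_zero (hφ : ConvexOn ℝ Set.univ φ) {x : EuclideanSpace ℝ (Fin n)}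
    (hx : -gradient f x ∈ subdiff φ x) : resid f φ x = 0 := by
  rw [resid, sub_eq_add_neg x (gradient f x), proxPt_add_eq_self hφ hx, sub_self]

end Prox

section Taylor

theorem norm_sub_sub_fderiv_le {E F : Type*} [NormedAddCommGroup E] [NormedSpace ℝ E]
    [NormedAddCommGroup F] [NormedSpace ℝ F] {g : E → F} {s : Set E} {K : ℝ≥0}
    (hs : Convex ℝ s) (hg : ∀ y ∈ s, DifferentiableAt ℝ g y) (hK : LipschitzOnWith K (fderiv ℝ g) s)
    {x y : E} (hx : x ∈ s) (hy : y ∈ s) :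
    ‖g y - g x - fderiv ℝ g x (y - x)‖ ≤ K * ‖y - x‖ ^ 2 := by
  have hsegment : segment ℝ x y ⊆ s := hs.segment_subset hx hy
  calc ‖g y - g x - fderiv ℝ g x (y - x)‖ ≤ K * ‖y - x‖ * ‖y - x‖ := by
        refine (convex_segment x y).norm_image_sub_le_of_norm_hasFDerivWithin_le'
          (fun z hz => (hg z (hsegment hz)).hasFDerivAt.hasFDerivWithinAt) (fun z hz => ?_)
          (left_mem_segment ℝ x y) (right_mem_segment ℝ x y)
        refine (hK.norm_sub_le (hsegment hz) hx).trans ?_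
        gcongr
        exact norm_sub_le_of_mem_segment hz
    _ = K * ‖y - x‖ ^ 2 := by ring

variable {E : Type*} [NormedAddCommGroup E] [InnerProductSpace ℝ E] [CompleteSpace E] {f : E → ℝ}
  {a : E}

theorem contDiff_gradient {k : WithTop ℕ∞} (hf : ContDiff ℝ (k + 1) f) :
    ContDiff ℝ k (gradient f) :=
  (InnerProductSpace.toDual ℝ E).symm.toContinuousLinearEquiv.contDiff.comp
    (hf.fderiv_right le_rfl)

theorem hasDerivAt_sub_quadratic_lineMap (hf : Differentiable ℝ f) (x v : E) (t : ℝ) :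
    HasDerivAt (fun t : ℝ => f (x + t • v) - t * ⟪gradient f x, v⟫
        - t ^ 2 * ((1 / 2) * ⟪v, fderiv ℝ (gradient f) x v⟫))
      ⟪gradient f (x + t • v) - gradient f x - fderiv ℝ (gradient f) x (t • v), v⟫ t := by
  have hline : HasDerivAt (fun t : ℝ => x + t • v) v t := by
    simpa using ((hasDerivAt_id t).smul_const v).const_add x
  have hderiv := (((hf (x + t • v)).hasGradientAt.hasFDerivAt.comp_hasDerivAt t hline).sub
    ((hasDerivAt_id t).mul_const ⟪gradient f x, v⟫)).sub
    ((hasDerivAt_pow 2 t).mul_const ((1 / 2) * ⟪v, fderiv ℝ (gradient f) x v⟫))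
  refine hderiv.congr_deriv ?_
  simp only [map_smul, inner_sub_left, real_inner_smul_left, InnerProductSpace.toDual_apply_apply,
    Nat.cast_ofNat, Nat.add_one_sub_one, pow_one, one_mul]
  rw [real_inner_comm (fderiv ℝ (gradient f) x v) v]
  ring

theorem abs_sub_quadratic_le {s : Set E} {K : ℝ≥0} (hs : Convex ℝ s) (hf : Differentiable ℝ f)
    (hgrad : ∀ y ∈ s, DifferentiableAt ℝ (gradient f) y)
    (hK : LipschitzOnWith K (fderiv ℝ (gradient f)) s) {x y : E} (hx : x ∈ s) (hy : y ∈ s) :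
    |f y - f x - ⟪gradient f x, y - x⟫ - (1 / 2) * ⟪y - x, fderiv ℝ (gradient f) x (y - x)⟫|
      ≤ K * ‖y - x‖ ^ 3 := by
  set v := y - x with hv
  have hbound : ∀ t ∈ Set.Ico (0 : ℝ) 1,
      ‖⟪gradient f (x + t • v) - gradient f x - fderiv ℝ (gradient f) x (t • v), v⟫‖
        ≤ K * ‖v‖ ^ 3 := by
    rintro t ⟨ht, ht1⟩
    have htaylor := norm_sub_sub_fderiv_le hs hgrad hK hx
      (hs.add_smul_sub_mem hx hy (t := t) ⟨ht, ht1.le⟩)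
    rw [add_sub_cancel_left, ← hv] at htaylor
    have htv : ‖t • v‖ ≤ ‖v‖ := by
      rw [norm_smul, Real.norm_of_nonneg ht]
      exact mul_le_of_le_one_left (norm_nonneg v) ht1.le
    calc _ ≤ ‖gradient f (x + t • v) - gradient f x - fderiv ℝ (gradient f) x (t • v)‖ * ‖v‖ :=
          norm_inner_le_norm _ _
      _ ≤ K * ‖v‖ ^ 2 * ‖v‖ := by
          gcongr
          exact htaylor.trans (by gcongr)
      _ = K * ‖v‖ ^ 3 := by ring
  have hmean := norm_image_sub_le_of_norm_deriv_le_segment_01'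
    (fun t _ => (hasDerivAt_sub_quadratic_lineMap hf x v t).hasDerivWithinAt) hbound
  rw [Real.norm_eq_abs] at hmean
  convert hmean using 2
  simp only [one_smul, zero_smul, add_zero, hv, add_sub_cancel]
  ring

theorem exists_ball_lipschitzOnWith {X Y : Type*} [PseudoMetricSpace X] [PseudoEMetricSpace Y]
    {g : X → Y} {a : X} (h : ∃ K, ∃ s ∈ 𝓝 a, LipschitzOnWith K g s) :
    ∃ K, ∃ ε > 0, LipschitzOnWith K g (ball a ε) := by
  obtain ⟨K, s, hs, hK⟩ := h
  obtain ⟨ε, hε, hball⟩ := Metric.mem_nhds_iff.1 hs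
  exact ⟨K, ε, hε, hK.mono hball⟩

theorem isBigO_sub_sub_fderiv {E F : Type*} [NormedAddCommGroup E] [NormedSpace ℝ E]
    [NormedAddCommGroup F] [NormedSpace ℝ F] {g : E → F} {a : E} (hg : Differentiable ℝ g)
    (hlip : ∃ K, ∃ s ∈ 𝓝 a, LipschitzOnWith K (fderiv ℝ g) s) :
    (fun p : E × E => g p.2 - g p.1 - fderiv ℝ g p.1 (p.2 - p.1))
      =O[𝓝 (a, a)] fun p => ‖p.2 - p.1‖ ^ 2 := by
  obtain ⟨K, ε, hε, hK⟩ := exists_ball_lipschitzOnWith hlip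
  refine .of_bound K ?_
  filter_upwards [prod_mem_nhds (ball_mem_nhds a hε) (ball_mem_nhds a hε)] with p ⟨h₁, h₂⟩
  rw [Real.norm_of_nonneg (by positivity)]
  exact norm_sub_sub_fderiv_le (convex_ball a ε) (fun y _ => hg y) hK h₁ h₂

theorem isBigO_sub_quadratic (hf : Differentiable ℝ f) (hgrad : Differentiable ℝ (gradient f))
    (hlip : ∃ K, ∃ s ∈ 𝓝 a, LipschitzOnWith K (fderiv ℝ (gradient f)) s) :
    (fun p : E × E => f p.2 - f p.1 - ⟪gradient f p.1, p.2 - p.1⟫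
        - (1 / 2) * ⟪p.2 - p.1, fderiv ℝ (gradient f) p.1 (p.2 - p.1)⟫)
      =O[𝓝 (a, a)] fun p => ‖p.2 - p.1‖ ^ 3 := by
  obtain ⟨K, ε, hε, hK⟩ := exists_ball_lipschitzOnWith hlip
  refine .of_bound K ?_
  filter_upwards [prod_mem_nhds (ball_mem_nhds a hε) (ball_mem_nhds a hε)] with p ⟨h₁, h₂⟩
  rw [Real.norm_eq_abs, Real.norm_of_nonneg (pow_nonneg (norm_nonneg _) 3)]
  exact abs_sub_quadratic_le (convex_ball a ε) hf (fun y _ => hgrad y) hK h₁ h₂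

end Taylor

section Asymptotics

variable {ι : Type*} {l : Filter ι} {u : ι → ℝ} {a b : ℝ}

theorem isLittleO_rpow_rpow_of_lt (hu : Tendsto u l (𝓝[>] 0)) (hab : b < a) :
    (fun i => u i ^ a) =o[l] fun i => u i ^ b := by
  have hlim : Tendsto (fun i => u i ^ (a - b)) l (𝓝 0) := by
    simpa [Real.zero_rpow (sub_pos.2 hab).ne'] using
      (tendsto_nhds_of_tendsto_nhdsWithin hu).rpow_const (p := a - b)
        (Or.inr (sub_pos.2 hab).le)
  refine (((isLittleO_one_iff ℝ).2 hlim).mul_isBigO (isBigO_refl (fun i => u i ^ b) l)).congr' ?_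
    (by simp)
  filter_upwards [hu eventually_mem_nhdsWithin] with i hi
  rw [← Real.rpow_add hi, sub_add_cancel]

theorem isBigO_rpow_rpow_of_le (hu : Tendsto u l (𝓝[>] 0)) (hab : b ≤ a) :
    (fun i => u i ^ a) =O[l] fun i => u i ^ b := by
  rcases hab.eq_or_lt with rfl | hlt
  · exact isBigO_refl _ l
  · exact (isLittleO_rpow_rpow_of_lt hu hlt).isBigO

theorem isBigO_infDist_of_isBigO_dist {X F : Type*} [PseudoMetricSpace X]
    [SeminormedAddCommGroup F] {g : X → F} {S : Set X} {a : X} (ha : a ∈ S)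
    (h : (fun p : X × X => g p.1) =O[𝓝 a ×ˢ 𝓝[S] a] fun p => dist p.1 p.2) :
    g =O[𝓝 a] fun x => infDist x S := by
  obtain ⟨C, hC, hbound⟩ := h.exists_pos
  obtain ⟨⟨ε, ε'⟩, ⟨hε, hε'⟩, hball⟩ :=
    (nhds_basis_ball.prod (nhdsWithin_hasBasis nhds_basis_ball S)).eventually_iff.1 hbound.bound
  refine .of_bound C ?_
  filter_upwards [ball_mem_nhds a (lt_min hε (half_pos hε'))] with x hx
  rw [mem_ball, lt_min_iff] at hx
  have hne : (S ∩ closedBall x (dist a x)).Nonempty := ⟨a, ha, mem_closedBall.2 le_rfl⟩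
  rw [Real.norm_of_nonneg infDist_nonneg, ← infDist_inter_closedBall_of_mem ha, ← div_le_iff₀' hC,
    le_infDist hne]
  rintro y ⟨hyS, hy⟩
  rw [mem_closedBall, dist_comm a x] at hy
  have hya : y ∈ ball a ε' := by
    rw [mem_ball]
    linarith [dist_triangle y x a]
  have hxy := hball (x := (x, y)) ⟨hx.1, hya, hyS⟩
  rwa [Real.norm_of_nonneg dist_nonneg, ← div_le_iff₀' hC] at hxy

theorem exists_forall_mem_isBigO_sub {E : Type*} [SeminormedAddCommGroup E] {S : Set E}
    (hS : S.Nonempty) {x : ι → E} (hu : ∀ i, 0 < u i)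
    (hx : (fun i => infDist (x i) S) =O[l] u) :
    ∃ y : ι → E, (∀ i, y i ∈ S) ∧ (fun i => y i - x i) =O[l] u := by
  choose y hyS hy using fun i =>
    (infDist_lt_iff hS).1 (lt_add_of_pos_right (infDist (x i) S) (hu i))
  refine ⟨y, hyS, (IsBigO.of_norm_le fun i => ?_).trans (hx.add (isBigO_refl u l))⟩
  rw [← dist_eq_norm, dist_comm]
  exact (hy i).le

theorem isBigO_clm_apply {E F : Type*} [NormedAddCommGroup E] [NormedSpace ℝ E]
    [NormedAddCommGroup F] [NormedSpace ℝ F] {T : ι → E →L[ℝ] F} {v : ι → E}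
    {t : ι → ℝ} (hT : T =O[l] t) (hv : v =O[l] u) :
    (fun i => T i (v i)) =O[l] fun i => t i * u i :=
  (IsBigO.of_norm_le fun i => (T i).le_opNorm (v i)).trans (hT.norm_left.mul hv.norm_left)

theorem isBigO_of_mul_left {E : Type*} [SeminormedAddCommGroup E] {t : ι → ℝ} {v : ι → E}
    (ht : ∀ i, t i ≠ 0) (h : (fun i => t i * ‖v i‖) =O[l] fun i => t i * u i) : v =O[l] u := by
  obtain ⟨C, hC⟩ := h.bound
  refine .of_bound C (hC.mono fun i hi => ?_)
  rw [norm_mul, norm_mul, norm_norm, mul_left_comm] at hi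
  exact le_of_mul_le_mul_left hi (norm_pos_iff.2 (ht i))

end Asymptotics

section Capture

variable {X : Type*} [PseudoMetricSpace X] {x : ℕ → X} {K : Set ℕ} {a : X}

theorem atTop_le_comap_nhds_inf_principal_of_lyapunov {V : ℕ → ℝ}
    [(comap x (𝓝 a) ⊓ 𝓟 K).NeBot] (hdist : ∀ k, dist (x k) a ≤ V k)
    (hV : Tendsto V (comap x (𝓝 a) ⊓ 𝓟 K) (𝓝 0))
    (hstep : ∀ᶠ k in comap x (𝓝 a) ⊓ 𝓟 K, k + 1 ∈ K ∧ V (k + 1) ≤ V k) :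
    atTop ≤ comap x (𝓝 a) ⊓ 𝓟 K := by
  have hbasis := (nhds_basis_ball (x := a)).comap x |>.inf_principal K
  obtain ⟨ε, hε, hball⟩ := hbasis.eventually_iff.1 hstep
  refine hbasis.ge_iff.2 fun ε' hε' => ?_
  obtain ⟨k₀, hVk₀, hk₀⟩ := ((hV.eventually_lt_const (lt_min hε hε')).and
    (eventually_inf_principal.2 (Eventually.of_forall fun _ => id))).exists
  have htrapped : ∀ k ≥ k₀, k ∈ K ∧ V k < min ε ε' := by
    refine Nat.le_induction ⟨hk₀, hVk₀⟩ fun k _ ⟨hkK, hVk⟩ => ?_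
    obtain ⟨hk, hVsucc⟩ := hball ⟨(hdist k).trans_lt (hVk.trans_le (min_le_left _ _)), hkK⟩
    exact ⟨hk, hVsucc.trans_lt hVk⟩
  filter_upwards [eventually_ge_atTop k₀] with k hk
  obtain ⟨hkK, hVk⟩ := htrapped k hk
  exact ⟨(hdist k).trans_lt (hVk.trans_le (min_le_right _ _)), hkK⟩

theorem atTop_le_comap_nhds_inf_principal {s : ℕ → ℝ}
    [(comap x (𝓝 a) ⊓ 𝓟 K).NeBot] (hs0 : ∀ k, 0 ≤ s k)
    (hs : Tendsto s (comap x (𝓝 a) ⊓ 𝓟 K) (𝓝 0))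
    (hK : ∀ᶠ k in comap x (𝓝 a) ⊓ 𝓟 K, k + 1 ∈ K)
    (hdist : (fun k => dist (x (k + 1)) (x k)) =O[comap x (𝓝 a) ⊓ 𝓟 K] s)
    (hsucc : (fun k => s (k + 1)) =o[comap x (𝓝 a) ⊓ 𝓟 K] s) :
    atTop ≤ comap x (𝓝 a) ⊓ 𝓟 K := by
  obtain ⟨C, hC, hdistC⟩ := hdist.exists_pos
  have hx : Tendsto (fun k => dist (x k) a) (comap x (𝓝 a) ⊓ 𝓟 K) (𝓝 0) :=
    tendsto_iff_dist_tendsto_zero.1 (tendsto_comap.mono_left inf_le_left)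
  -- Once `s (k + 1) ≤ s k / 2`, the drop `C * s k` of the second term pays for the step.
  refine atTop_le_comap_nhds_inf_principal_of_lyapunov (V := fun k => dist (x k) a + 2 * C * s k)
    (fun k => le_add_of_nonneg_right (mul_nonneg (by positivity) (hs0 k)))
    (by simpa using hx.add (hs.const_mul (2 * C))) ?_
  filter_upwards [hK, hdistC.bound, hsucc.def one_half_pos] with k hk hkdist hksucc
  rw [Real.norm_of_nonneg dist_nonneg, Real.norm_of_nonneg (hs0 k)] at hkdist
  rw [Real.norm_of_nonneg (hs0 _), Real.norm_of_nonneg (hs0 k)] at hksucc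
  refine ⟨hk, ?_⟩
  have htri := dist_triangle (x (k + 1)) (x k) a
  have hCs := mul_le_mul_of_nonneg_left hksucc (by positivity : (0 : ℝ) ≤ 2 * C)
  linarith

end Capture

section Model

variable {n : ℕ} {f φ : EuclideanSpace ℝ (Fin n) → ℝ}
  {B : EuclideanSpace ℝ (Fin n) →L[ℝ] EuclideanSpace ℝ (Fin n)}
  {x y z : EuclideanSpace ℝ (Fin n)} {μ : ℝ}

/-- The model of `f + φ` around `x` that replaces `f` by its quadratic expansion with curvature
operator `B`. With `B = ∇²f(x)` this is `q_k`, with `B = G_k` it is `q̂_k`. -/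
def quadModel (f φ : EuclideanSpace ℝ (Fin n) → ℝ)
    (B : EuclideanSpace ℝ (Fin n) →L[ℝ] EuclideanSpace ℝ (Fin n))
    (x y : EuclideanSpace ℝ (Fin n)) : ℝ :=
  f x + ⟪gradient f x, y - x⟫ + (1 / 2) * ⟪y - x, B (y - x)⟫ + φ y

/-- The residual `R_k(y)` of the subproblem of minimizing `quadModel f φ B x`. -/
def modelResid (f φ : EuclideanSpace ℝ (Fin n) → ℝ)
    (B : EuclideanSpace ℝ (Fin n) →L[ℝ] EuclideanSpace ℝ (Fin n))
    (x y : EuclideanSpace ℝ (Fin n)) : EuclideanSpace ℝ (Fin n) :=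
  y - proxPt φ (y - gradient f x - B (y - x))

/-- The reduction `pred_k` of `f + φ` from `x` to `y` predicted by the Newton model at `x`. -/
def predictedReduction (f φ : EuclideanSpace ℝ (Fin n) → ℝ) (x y : EuclideanSpace ℝ (Fin n)) : ℝ :=
  f x + φ x - quadModel f φ (fderiv ℝ (gradient f) x) x y

/-- The reduction `ared_k` of `f + φ` achieved by moving from `x` to `y`. -/
def actualReduction (f φ : EuclideanSpace ℝ (Fin n) → ℝ) (x y : EuclideanSpace ℝ (Fin n)) : ℝ :=
  f x + φ x - (f y + φ y)

theorem modelResid_self : modelResid f φ B x x = resid f φ x := by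
  rw [modelResid, resid, sub_self, map_zero, sub_zero]

theorem norm_sub_proxPt_sub_le (hφ : ConvexOn ℝ Set.univ φ) (y z u v : EuclideanSpace ℝ (Fin n)) :
    ‖(y - proxPt φ (y - u)) - (z - proxPt φ (z - v))‖ ≤ 2 * ‖y - z‖ + ‖u - v‖ := by
  have hprox := norm_proxPt_sub_proxPt_le hφ (y - u) (z - v)
  rw [sub_sub_sub_comm] at hprox ⊢
  linarith [norm_sub_le (y - z) (proxPt φ (y - u) - proxPt φ (z - v)),
    norm_sub_le (y - z) (u - v)]

theorem norm_resid_sub_resid_le (hφ : ConvexOn ℝ Set.univ φ) :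
    ‖resid f φ y - resid f φ z‖ ≤ 2 * ‖y - z‖ + ‖gradient f y - gradient f z‖ :=
  norm_sub_proxPt_sub_le hφ _ _ _ _

theorem norm_modelResid_sub_modelResid_le (hφ : ConvexOn ℝ Set.univ φ) :
    ‖modelResid f φ B x y - modelResid f φ B x z‖ ≤ 2 * ‖y - z‖ + ‖B (y - z)‖ := by
  have h := norm_sub_proxPt_sub_le hφ y z (gradient f x + B (y - x)) (gradient f x + B (z - x))
  rw [← sub_sub, ← sub_sub, add_sub_add_left_eq_sub, ← map_sub, sub_sub_sub_cancel_right] at h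
  exact h

theorem norm_resid_sub_modelResid_le (hφ : ConvexOn ℝ Set.univ φ) :
    ‖resid f φ y - modelResid f φ B x y‖ ≤ ‖gradient f y - gradient f x - B (y - x)‖ := by
  have h := norm_sub_proxPt_sub_le hφ y y (gradient f y) (gradient f x + B (y - x))
  rw [sub_self, norm_zero, mul_zero, zero_add, ← sub_sub, ← sub_sub] at h
  exact h

theorem mul_norm_sub_modelResid_sub_le (hφ : ConvexOn ℝ Set.univ φ)
    (hB : ∀ v, μ * ‖v‖ ^ 2 ≤ ⟪B v, v⟫) (hz : -gradient f z ∈ subdiff φ z) :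
    μ * ‖y - modelResid f φ B x y - z‖ ≤ ‖modelResid f φ B x y - B (modelResid f φ B x y)
      + (gradient f z - gradient f x - B (z - x))‖ := by
  set e := modelResid f φ B x y with he
  have hprox : proxPt φ (y - gradient f x - B (y - x)) = y - e := by rw [he, modelResid]; abel
  have hmono := inner_sub_sub_nonneg_of_mem_subdiff
    (sub_proxPt_mem_subdiff hφ (y - gradient f x - B (y - x))) hz
  rw [hprox] at hmono
  set w := y - e - z with hw
  have hsplit : y - gradient f x - B (y - x) - (y - e) - -gradient f z
      = e - B e + (gradient f z - gradient f x - B (z - x)) - B w := by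
    rw [show y - x = w + e + (z - x) by rw [hw]; abel, map_add, map_add]
    abel
  rw [hsplit, inner_sub_left] at hmono
  have hcs := real_inner_le_norm (e - B e + (gradient f z - gradient f x - B (z - x))) w
  have hBw := hB w
  rcases (norm_nonneg w).eq_or_lt with hw0 | hw0
  · rw [← hw0, mul_zero]
    exact norm_nonneg _
  · refine le_of_mul_le_mul_right ?_ hw0
    linarith [pow_two ‖w‖]

theorem isBigO_resid_infDist (hφ : ConvexOn ℝ Set.univ φ) (hf : ContDiff ℝ 2 f)
    {S : Set (EuclideanSpace ℝ (Fin n))} (hS : ∀ y ∈ S, -gradient f y ∈ subdiff φ y)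
    (hx : x ∈ S) : resid f φ =O[𝓝 x] fun y => infDist y S := by
  have hgrad : ContDiff ℝ 1 (gradient f) := contDiff_gradient (by rwa [one_add_one_eq_two])
  obtain ⟨K, s, hs, hK⟩ := hgrad.contDiffAt.exists_lipschitzOnWith (x := x)
  refine isBigO_infDist_of_isBigO_dist hx (.of_bound (2 + K) ?_)
  filter_upwards [prod_mem_prod hs (inter_mem self_mem_nhdsWithin (mem_nhdsWithin_of_mem_nhds hs))]
    with p ⟨h₁, hpS, h₂⟩
  calc ‖resid f φ p.1‖ = ‖resid f φ p.1 - resid f φ p.2‖ := by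
        rw [resid_eq_zero hφ (hS _ hpS), sub_zero]
    _ ≤ 2 * ‖p.1 - p.2‖ + K * ‖p.1 - p.2‖ :=
        (norm_resid_sub_resid_le hφ).trans (by gcongr; exact hK.norm_sub_le h₁ h₂)
    _ = (2 + K) * ‖dist p.1 p.2‖ := by rw [dist_eq_norm, norm_norm]; ring

/-- The local assumptions at a point `a` of a set `S` of stationary points of `f + φ`: smoothness
of `f` and the Hölderian error bound of order `q`. -/
structure LocalAssumptions (f φ : EuclideanSpace ℝ (Fin n) → ℝ)
    (S : Set (EuclideanSpace ℝ (Fin n))) (a : EuclideanSpace ℝ (Fin n)) (q : ℝ) : Prop where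
  convexOn : ConvexOn ℝ Set.univ φ
  contDiff : ContDiff ℝ 2 f
  lipschitz_hessian : ∃ K, ∃ s ∈ 𝓝 a, LipschitzOnWith K (fderiv ℝ (gradient f)) s
  stationary : ∀ y ∈ S, -gradient f y ∈ subdiff φ y
  mem : a ∈ S
  error_bound : (fun y => infDist y S) =O[𝓝 a] fun y => ‖resid f φ y‖ ^ q

theorem LocalAssumptions.contDiff_gradient
    {S : Set (EuclideanSpace ℝ (Fin n))} {a : EuclideanSpace ℝ (Fin n)} {q : ℝ}
    (h : LocalAssumptions f φ S a q) :
    ContDiff ℝ 1 (gradient f) :=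
  _root_.contDiff_gradient (by rw [one_add_one_eq_two]; exact h.contDiff)

end Model

section Run

variable {n : ℕ}

/-- The parameters of the regularized proximal Newton method that enter the local analysis, with
their admissible ranges. -/
structure Params where
  (c₁ η θ α νmin νbar δ τ pmin κ : ℝ)
  c₁_lt_one : c₁ < 1
  η_pos : 0 < η
  η_lt_one : η < 1
  θ_nonneg : 0 ≤ θ
  θ_lt_one : θ < 1
  α_nonneg : 0 ≤ α
  νmin_pos : 0 < νmin
  δ_pos : 0 < δ
  δ_le_τ : δ ≤ τ
  one_add_δ_lt_κ : 1 + δ < κ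

theorem Params.one_lt_order (p : Params) {q : ℝ} (hq : 1 < p.δ + q) :
    1 < min (1 + p.τ) (p.δ + q) :=
  lt_min (lt_add_of_pos_right 1 (p.δ_pos.trans_le p.δ_le_τ)) hq

/-- The test by which an iteration moving from `x` to the trial point `y` is declared
unsuccessful. -/
def Params.Rejects (p : Params) (f φ : EuclideanSpace ℝ (Fin n) → ℝ)
    (x y : EuclideanSpace ℝ (Fin n)) : Prop :=
  predictedReduction f φ x y
      ≤ p.pmin * (1 - p.θ) * ‖y - x‖ * min ‖resid f φ x‖ (‖resid f φ x‖ ^ p.κ) ∨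
    actualReduction f φ x y / predictedReduction f φ x y ≤ p.c₁

/-- The regularized Hessian `∇²f(x) + P + μ I`, where `P` compensates negative curvature. -/
def regHessian (f : EuclideanSpace ℝ (Fin n) → ℝ)
    (P : EuclideanSpace ℝ (Fin n) →L[ℝ] EuclideanSpace ℝ (Fin n)) (μ : ℝ)
    (x : EuclideanSpace ℝ (Fin n)) : EuclideanSpace ℝ (Fin n) →L[ℝ] EuclideanSpace ℝ (Fin n) :=
  fderiv ℝ (gradient f) x + P + μ • ContinuousLinearMap.id ℝ (EuclideanSpace ℝ (Fin n))

/-- A run of the regularized proximal Newton method on `f + φ` that never reaches a stationary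
point: iterates `x k`, trial points `trial k`, arbitrary positive semidefinite curvature
compensations `shift k` making `∇²f(x k) + shift k` positive semidefinite, and regularization
parameters `ν k * rbar k ^ δ`. Of the update rules for `ν` only bounds they imply are kept. -/
structure Run (p : Params) (f φ : EuclideanSpace ℝ (Fin n) → ℝ) where
  (x trial : ℕ → EuclideanSpace ℝ (Fin n))
  shift : ℕ → EuclideanSpace ℝ (Fin n) →L[ℝ] EuclideanSpace ℝ (Fin n)
  (ν rbar : ℕ → ℝ)
  resid_ne_zero : ∀ k, resid f φ (x k) ≠ 0
  shift_nonneg : ∀ k v, 0 ≤ ⟪shift k v, v⟫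
  hessian_add_shift_nonneg : ∀ k v, 0 ≤ ⟪(fderiv ℝ (gradient f) (x k) + shift k) v, v⟫
  norm_modelResid_le : ∀ k,
    ‖modelResid f φ (regHessian f (shift k) (ν k * rbar k ^ p.δ) (x k)) (x k) (trial k)‖
      ≤ p.θ * min ‖resid f φ (x k)‖ (‖resid f φ (x k)‖ ^ (1 + p.τ))
  mul_norm_sq_le_sub_quadModel : ∀ k,
    p.α * (ν k * rbar k ^ p.δ) / 2 * ‖trial k - x k‖ ^ 2
      ≤ f (x k) + φ (x k)
        - quadModel f φ (regHessian f (shift k) (ν k * rbar k ^ p.δ) (x k)) (x k) (trial k)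
  succ_of_rejects : ∀ k, p.Rejects f φ (x k) (trial k) →
    x (k + 1) = x k ∧ ∃ σ ≥ (1 : ℝ), ν (k + 1) = σ * ν k
  succ_of_not_rejects : ∀ k, ¬p.Rejects f φ (x k) (trial k) →
    x (k + 1) = trial k ∧ ν (k + 1) ∈ Set.Icc (min (ν k) p.νmin) p.νbar
  ν_zero_mem : ν 0 ∈ Set.Icc p.νmin p.νbar
  rbar_zero : rbar 0 = ‖resid f φ (x 0)‖
  rbar_succ : ∀ k,
    (‖resid f φ (x (k + 1))‖ ≤ p.η * rbar k → rbar (k + 1) = ‖resid f φ (x (k + 1))‖) ∧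
      (¬‖resid f φ (x (k + 1))‖ ≤ p.η * rbar k → rbar (k + 1) = rbar k)

namespace Run

variable {p : Params} {f φ : EuclideanSpace ℝ (Fin n) → ℝ} (run : Run p f φ)

/-- The residual norm `‖r(x^k)‖`. -/
def r (k : ℕ) : ℝ := ‖resid f φ (run.x k)‖

/-- The regularization parameter `μ_k`. -/
def μ (k : ℕ) : ℝ := run.ν k * run.rbar k ^ p.δ

/-- The regularized Hessian `G_k`. -/
def G (k : ℕ) : EuclideanSpace ℝ (Fin n) →L[ℝ] EuclideanSpace ℝ (Fin n) :=
  regHessian f (run.shift k) (run.μ k) (run.x k)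

/-- The trial step `d^k`. -/
def d (k : ℕ) : EuclideanSpace ℝ (Fin n) := run.trial k - run.x k

/-- The model residual `R_k(x̂^k)` left at the trial point. -/
def e (k : ℕ) : EuclideanSpace ℝ (Fin n) :=
  modelResid f φ (run.G k) (run.x k) (run.trial k)

/-- The index set `K` of the iterations whose residual has dropped below `η` times the previous
reference value. -/
def K : Set ℕ := {0} ∪ {k | 1 ≤ k ∧ ‖resid f φ (run.x k)‖ ≤ p.η * run.rbar (k - 1)}

theorem r_pos (k : ℕ) : 0 < run.r k := norm_pos_iff.2 (run.resid_ne_zero k)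

theorem succ_mem_K {k : ℕ} : k + 1 ∈ run.K ↔ run.r (k + 1) ≤ p.η * run.rbar k := by
  simp [K, r]

theorem rbar_eq_r {k : ℕ} (hk : k ∈ run.K) : run.rbar k = run.r k := by
  cases k with
  | zero => exact run.rbar_zero
  | succ k => exact (run.rbar_succ k).1 (run.succ_mem_K.1 hk)

theorem η_mul_rbar_lt_r (k : ℕ) : p.η * run.rbar k < run.r k := by
  by_cases hk : k ∈ run.K
  · rw [run.rbar_eq_r hk]
    exact mul_lt_of_lt_one_left (run.r_pos k) p.η_lt_one
  · cases k with
    | zero => exact absurd (Or.inl rfl) hk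
    | succ k =>
      rw [run.succ_mem_K] at hk
      rw [(run.rbar_succ k).2 hk]
      exact not_le.1 hk

theorem not_rejects_of_succ_mem_K {k : ℕ} (hk : k + 1 ∈ run.K) :
    ¬p.Rejects f φ (run.x k) (run.trial k) := by
  intro hrej
  have hr : run.r (k + 1) = run.r k := by rw [r, (run.succ_of_rejects k hrej).1, r]
  exact (run.η_mul_rbar_lt_r k).not_ge (hr ▸ run.succ_mem_K.1 hk)

theorem ν_le_νbar {k : ℕ} (hk : k ∈ run.K) : run.ν k ≤ p.νbar := by
  cases k with
  | zero => exact run.ν_zero_mem.2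
  | succ k => exact (run.succ_of_not_rejects k (run.not_rejects_of_succ_mem_K hk)).2.2

theorem νmin_le_ν (k : ℕ) : p.νmin ≤ run.ν k := by
  induction k with
  | zero => exact run.ν_zero_mem.1
  | succ k ih =>
    by_cases hrej : p.Rejects f φ (run.x k) (run.trial k)
    · obtain ⟨σ, hσ, hν⟩ := (run.succ_of_rejects k hrej).2
      rw [hν]
      exact ih.trans (le_mul_of_one_le_left (p.νmin_pos.le.trans ih) hσ)
    · exact (le_min ih le_rfl).trans (run.succ_of_not_rejects k hrej).2.1

theorem νmin_mul_r_rpow_le_μ {k : ℕ} (hk : k ∈ run.K) :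
    p.νmin * run.r k ^ p.δ ≤ run.μ k := by
  rw [μ, run.rbar_eq_r hk]
  exact mul_le_mul_of_nonneg_right (run.νmin_le_ν k) (Real.rpow_nonneg (run.r_pos k).le _)

theorem μ_le_νbar_mul_r_rpow {k : ℕ} (hk : k ∈ run.K) :
    run.μ k ≤ p.νbar * run.r k ^ p.δ := by
  rw [μ, run.rbar_eq_r hk]
  exact mul_le_mul_of_nonneg_right (run.ν_le_νbar hk) (Real.rpow_nonneg (run.r_pos k).le _)

theorem μ_pos {k : ℕ} (hk : k ∈ run.K) : 0 < run.μ k :=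
  (mul_pos p.νmin_pos (Real.rpow_pos_of_pos (run.r_pos k) _)).trans_le
    (run.νmin_mul_r_rpow_le_μ hk)

theorem G_apply (k : ℕ) (v : EuclideanSpace ℝ (Fin n)) :
    run.G k v = fderiv ℝ (gradient f) (run.x k) v + run.shift k v + run.μ k • v := rfl

theorem μ_mul_norm_sq_le (k : ℕ) (v : EuclideanSpace ℝ (Fin n)) :
    run.μ k * ‖v‖ ^ 2 ≤ ⟪run.G k v, v⟫ := by
  have hpsd := run.hessian_add_shift_nonneg k v
  rw [add_apply] at hpsd
  rw [run.G_apply, inner_add_left, real_inner_smul_left, real_inner_self_eq_norm_sq]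
  linarith

theorem half_μ_mul_norm_d_sq_le {k : ℕ} (hk : k ∈ run.K) :
    run.μ k / 2 * ‖run.d k‖ ^ 2 ≤ predictedReduction f φ (run.x k) (run.trial k) := by
  have hnonneg : 0 ≤ p.α * run.μ k / 2 * ‖run.d k‖ ^ 2 := by
    have hα := p.α_nonneg
    have hμ := run.μ_pos hk
    positivity
  have hdecrease : quadModel f φ (run.G k) (run.x k) (run.trial k)
      ≤ f (run.x k) + φ (run.x k) :=
    sub_nonneg.1 (hnonneg.trans (run.mul_norm_sq_le_sub_quadModel k))
  have hshift := run.shift_nonneg k (run.d k)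
  rw [quadModel, ← d, G_apply, inner_add_right, inner_add_right, real_inner_smul_right,
    real_inner_self_eq_norm_sq, real_inner_comm (run.shift k (run.d k))] at hdecrease
  rw [predictedReduction, quadModel, ← d]
  linarith

theorem norm_e_le_θ_mul_r (k : ℕ) : ‖run.e k‖ ≤ p.θ * run.r k :=
  (run.norm_modelResid_le k).trans
    (mul_le_mul_of_nonneg_left (min_le_left _ _) p.θ_nonneg)

theorem norm_e_le_r_rpow (k : ℕ) : ‖run.e k‖ ≤ run.r k ^ (1 + p.τ) := by
  have hnonneg : 0 ≤ run.r k ^ (1 + p.τ) := Real.rpow_nonneg (run.r_pos k).le _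
  calc ‖run.e k‖ ≤ p.θ * min (run.r k) (run.r k ^ (1 + p.τ)) := run.norm_modelResid_le k
    _ ≤ p.θ * run.r k ^ (1 + p.τ) := mul_le_mul_of_nonneg_left (min_le_right _ _) p.θ_nonneg
    _ ≤ run.r k ^ (1 + p.τ) := mul_le_of_le_one_left hnonneg p.θ_lt_one.le

variable {S : Set (EuclideanSpace ℝ (Fin n))} {a : EuclideanSpace ℝ (Fin n)} {q : ℝ}
  {l : Filter ℕ}

/-- Along the filter `l` the run approaches `a`, all indices lie in `K`, and the curvature
compensation is controlled by the distance to `S`. -/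
structure Approaches (S : Set (EuclideanSpace ℝ (Fin n))) (a : EuclideanSpace ℝ (Fin n))
    (l : Filter ℕ) : Prop where
  tendsto : Tendsto run.x l (𝓝 a)
  eventually_mem_K : ∀ᶠ k in l, k ∈ run.K
  isBigO_shift : run.shift =O[l] fun k => infDist (run.x k) S

namespace Approaches

variable {run} (hl : run.Approaches S a l) (h : LocalAssumptions f φ S a q) (hq : p.δ < q)

include hl h

theorem isBigO_infDist : (fun k => infDist (run.x k) S) =O[l] fun k => run.r k ^ q :=
  h.error_bound.comp_tendsto hl.tendsto

theorem isBigO_r_infDist : run.r =O[l] fun k => infDist (run.x k) S :=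
  ((isBigO_resid_infDist h.convexOn h.contDiff h.stationary h.mem).comp_tendsto
    hl.tendsto).norm_left

theorem isBigO_r_rpow : run.r =O[l] fun k => run.r k ^ q :=
  (hl.isBigO_r_infDist h).trans (hl.isBigO_infDist h)

theorem tendsto_r : Tendsto run.r l (𝓝[>] 0) := by
  refine tendsto_nhdsWithin_iff.2 ⟨(hl.isBigO_r_infDist h).trans_tendsto ?_, .of_forall run.r_pos⟩
  rw [← infDist_zero_of_mem h.mem]
  exact (continuous_infDist_pt S).continuousAt.tendsto.comp hl.tendsto

theorem isBigO_r_rpow_of_le {b c : ℝ} (hbc : c ≤ b) :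
    (fun k => run.r k ^ b) =O[l] fun k => run.r k ^ c :=
  isBigO_rpow_rpow_of_le (hl.tendsto_r h) hbc

theorem tendsto_r_rpow {b : ℝ} (hb : 0 < b) : Tendsto (fun k => run.r k ^ b) l (𝓝 0) := by
  simpa [Real.zero_rpow hb.ne'] using
    (tendsto_nhds_of_tendsto_nhdsWithin (hl.tendsto_r h)).rpow_const (p := b) (.inr hb.le)

theorem isBigO_shift_rpow : run.shift =O[l] fun k => run.r k ^ q :=
  hl.isBigO_shift.trans (hl.isBigO_infDist h)

omit h in
theorem isTheta_μ : run.μ =Θ[l] fun k => run.r k ^ p.δ := by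
  refine ⟨.of_bound p.νbar ?_, .of_bound p.νmin⁻¹ ?_⟩ <;>
    filter_upwards [hl.eventually_mem_K] with k hk <;>
    rw [Real.norm_of_nonneg (run.μ_pos hk).le,
      Real.norm_of_nonneg (Real.rpow_nonneg (run.r_pos k).le _)]
  · exact run.μ_le_νbar_mul_r_rpow hk
  · exact (le_inv_mul_iff₀ p.νmin_pos).2 (run.νmin_mul_r_rpow_le_μ hk)

include hq in
theorem isBigO_G : run.G =O[l] fun _ => (1 : ℝ) := by
  have hhess : (fun k => fderiv ℝ (gradient f) (run.x k)) =O[l] fun _ => (1 : ℝ) :=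
    ((h.contDiff_gradient.continuous_fderiv one_ne_zero).continuousAt.tendsto.comp
      hl.tendsto).isBigO_one ℝ
  have hshift : run.shift =O[l] fun _ => (1 : ℝ) :=
    (hl.isBigO_shift_rpow h).trans ((hl.tendsto_r_rpow h (p.δ_pos.trans hq)).isBigO_one ℝ)
  have hμ : run.μ =O[l] fun _ => (1 : ℝ) :=
    hl.isTheta_μ.isBigO.trans ((hl.tendsto_r_rpow h p.δ_pos).isBigO_one ℝ)
  have hid : (fun k => run.μ k • ContinuousLinearMap.id ℝ (EuclideanSpace ℝ (Fin n)))
      =O[l] fun _ => (1 : ℝ) := by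
    simpa using hμ.smul (isBigO_const_const (ContinuousLinearMap.id ℝ (EuclideanSpace ℝ (Fin n)))
      (one_ne_zero (α := ℝ)) l)
  exact (hhess.add hshift).add hid

include hq in
theorem tendsto_of_isBigO_sub {v : ℕ → EuclideanSpace ℝ (Fin n)}
    (hv : (fun k => v k - run.x k) =O[l] fun k => run.r k ^ q) : Tendsto v l (𝓝 a) := by
  simpa using hl.tendsto.add (hv.trans_tendsto (hl.tendsto_r_rpow h (p.δ_pos.trans hq)))

include hq in
theorem isBigO_gradient_sub_sub_G {v : ℕ → EuclideanSpace ℝ (Fin n)}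
    (hv : (fun k => v k - run.x k) =O[l] fun k => run.r k ^ q) :
    (fun k => gradient f (v k) - gradient f (run.x k) - run.G k (v k - run.x k))
      =O[l] fun k => run.r k ^ (p.δ + q) := by
  have hrpow_mul (b c : ℝ) (hbc : p.δ + q ≤ b + c) :
      (fun k => run.r k ^ b * run.r k ^ c) =O[l] fun k => run.r k ^ (p.δ + q) := by
    simp only [← Real.rpow_add (run.r_pos _)]
    exact hl.isBigO_r_rpow_of_le h hbc
  have htaylor : (fun k => gradient f (v k) - gradient f (run.x k)
      - fderiv ℝ (gradient f) (run.x k) (v k - run.x k)) =O[l] fun k => run.r k ^ (p.δ + q) := by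
    refine ((isBigO_sub_sub_fderiv (h.contDiff_gradient.differentiable one_ne_zero)
      h.lipschitz_hessian).comp_tendsto
      (hl.tendsto.prodMk_nhds (hl.tendsto_of_isBigO_sub h hq hv))).trans ?_
    refine (hv.norm_left.pow 2).trans ?_
    simpa only [pow_two] using hrpow_mul q q (by linarith)
  have hshift := (isBigO_clm_apply (hl.isBigO_shift_rpow h) hv).trans
    (hrpow_mul q q (by linarith))
  have hμ := (hl.isTheta_μ.isBigO.smul hv).trans (hrpow_mul p.δ q le_rfl)
  refine ((htaylor.sub hshift).sub hμ).congr_left fun k => ?_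
  rw [run.G_apply]
  abel

omit hl h in
theorem isBigO_e (l : Filter ℕ) : run.e =O[l] fun k => run.r k ^ (1 + p.τ) :=
  .of_norm_le run.norm_e_le_r_rpow

theorem isBigO_e_rpow : run.e =O[l] fun k => run.r k ^ (p.δ + q) := by
  refine (isBigO_e l).trans
    ((hl.isBigO_r_rpow_of_le h (add_le_add_right p.δ_le_τ 1)).trans ?_)
  simp only [Real.rpow_add (run.r_pos _), Real.rpow_one, mul_comm (run.r _)]
  exact (isBigO_refl _ l).mul (hl.isBigO_r_rpow h)

include hq in
theorem isBigO_d : run.d =O[l] fun k => run.r k ^ q := by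
  obtain ⟨y, hyS, hy⟩ := exists_forall_mem_isBigO_sub ⟨a, h.mem⟩
    (fun k => Real.rpow_pos_of_pos (run.r_pos k) q) (hl.isBigO_infDist h)
  have he := hl.isBigO_e_rpow h
  have heq : run.e =O[l] fun k => run.r k ^ q :=
    he.trans (hl.isBigO_r_rpow_of_le h (le_add_of_nonneg_left p.δ_pos.le))
  have hGe : (fun k => run.G k (run.e k)) =O[l] fun k => run.r k ^ (p.δ + q) := by
    simpa only [one_mul] using isBigO_clm_apply (hl.isBigO_G h hq) he
  have hμw : (fun k => run.μ k * ‖run.trial k - run.e k - y k‖)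
      =O[l] fun k => run.r k ^ (p.δ + q) := by
    refine .trans (.of_norm_eventuallyLE ?_)
      ((he.sub hGe).add (hl.isBigO_gradient_sub_sub_G h hq hy)).norm_left
    filter_upwards [hl.eventually_mem_K] with k hk
    rw [Real.norm_of_nonneg (mul_nonneg (run.μ_pos hk).le (norm_nonneg _))]
    exact mul_norm_sub_modelResid_sub_le h.convexOn (run.μ_mul_norm_sq_le k)
      (h.stationary _ (hyS k))
  have hw : (fun k => run.trial k - run.e k - y k) =O[l] fun k => run.r k ^ q := by
    refine isBigO_of_mul_left (fun k => (Real.rpow_pos_of_pos (run.r_pos k) p.δ).ne') ?_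
    simp only [← Real.rpow_add (run.r_pos _)]
    exact (hl.isTheta_μ.symm.isBigO.mul (isBigO_refl _ l)).trans hμw
  refine ((hw.add heq).add hy).congr_left fun k => ?_
  rw [d]
  abel

include hq in
theorem isBigO_resid_trial :
    (fun k => resid f φ (run.trial k)) =O[l] fun k => run.r k ^ min (1 + p.τ) (p.δ + q) := by
  have hdiff : (fun k => resid f φ (run.trial k) - run.e k) =O[l] fun k => run.r k ^ (p.δ + q) :=
    (IsBigO.of_norm_le fun k => norm_resid_sub_modelResid_le h.convexOn).trans
      (hl.isBigO_gradient_sub_sub_G h hq (hl.isBigO_d h hq)).norm_left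
  simpa only [sub_add_cancel] using
    (hdiff.trans (hl.isBigO_r_rpow_of_le h (min_le_right _ _))).add
      ((isBigO_e l).trans (hl.isBigO_r_rpow_of_le h (min_le_left _ _)))

include hq in
theorem isBigO_r_d : run.r =O[l] run.d := by
  have hGd : (fun k => run.G k (run.d k)) =O[l] fun k => ‖run.d k‖ := by
    simpa only [one_mul] using isBigO_clm_apply (hl.isBigO_G h hq) (isBigO_refl _ l).norm_right
  have hle (k : ℕ) : (1 - p.θ) * run.r k ≤ 2 * ‖run.d k‖ + ‖run.G k (run.d k)‖ := by
    have hsub : ‖run.e k - resid f φ (run.x k)‖ ≤ 2 * ‖run.d k‖ + ‖run.G k (run.d k)‖ := by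
      rw [← modelResid_self (B := run.G k)]
      exact norm_modelResid_sub_modelResid_le h.convexOn
    have hsplit := norm_sub_norm_le (resid f φ (run.x k)) (run.e k)
    rw [norm_sub_rev] at hsplit
    linarith [run.norm_e_le_θ_mul_r k, show run.r k = ‖resid f φ (run.x k)‖ from rfl]
  have hθ : 0 < 1 - p.θ := sub_pos.2 p.θ_lt_one
  refine ((isBigO_const_mul_left_iff hθ.ne').1 (IsBigO.trans (.of_norm_le fun k => ?_)
    (((isBigO_refl _ l).norm_left.const_mul_left 2).norm_right.add hGd.norm_left))).of_norm_right
  rw [Real.norm_of_nonneg (mul_pos hθ (run.r_pos k)).le]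
  exact hle k

omit h in
theorem isBigO_rpow_mul_norm_sq_predictedReduction :
    (fun k => run.r k ^ p.δ * ‖run.d k‖ ^ 2)
      =O[l] fun k => predictedReduction f φ (run.x k) (run.trial k) := by
  refine (hl.isTheta_μ.symm.isBigO.mul (isBigO_refl _ l)).trans (.of_bound 2 ?_)
  filter_upwards [hl.eventually_mem_K] with k hk
  have hpos : 0 ≤ run.μ k * ‖run.d k‖ ^ 2 := mul_nonneg (run.μ_pos hk).le (sq_nonneg _)
  rw [Real.norm_of_nonneg hpos]
  linarith [run.half_μ_mul_norm_d_sq_le hk,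
    le_abs_self (predictedReduction f φ (run.x k) (run.trial k)),
    Real.norm_eq_abs (predictedReduction f φ (run.x k) (run.trial k))]

include hq in
theorem eventually_predictedReduction_pos :
    ∀ᶠ k in l, 0 < predictedReduction f φ (run.x k) (run.trial k) := by
  filter_upwards [hl.eventually_mem_K, (hl.isBigO_r_d h hq).eq_zero_imp] with k hk hd
  have hdne : run.d k ≠ 0 := fun h0 => (run.r_pos k).ne' (hd h0)
  exact (mul_pos (half_pos (run.μ_pos hk)) (pow_pos (norm_pos_iff.2 hdne) 2)).trans_le
    (run.half_μ_mul_norm_d_sq_le hk)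

include hq in
theorem isLittleO_norm_mul_min_predictedReduction :
    (fun k => ‖run.d k‖ * min (run.r k) (run.r k ^ p.κ))
      =o[l] fun k => predictedReduction f φ (run.x k) (run.trial k) := by
  have hmin : (fun k => min (run.r k) (run.r k ^ p.κ)) =O[l] fun k => run.r k ^ p.κ :=
    .of_norm_le fun k => by
      rw [Real.norm_of_nonneg (le_min (run.r_pos k).le (Real.rpow_nonneg (run.r_pos k).le _))]
      exact min_le_right _ _
  have hκ : (fun k => run.r k ^ p.κ) =o[l] fun k => run.r k ^ p.δ * ‖run.d k‖ := by
    refine (isLittleO_rpow_rpow_of_lt (hl.tendsto_r h) p.one_add_δ_lt_κ).trans_isBigO ?_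
    simp only [add_comm 1 p.δ, Real.rpow_add (run.r_pos _), Real.rpow_one]
    exact (isBigO_refl _ l).mul (hl.isBigO_r_d h hq).norm_right
  refine (((isBigO_refl _ l).mul_isLittleO (hmin.trans_isLittleO hκ)).congr_right fun k => ?_)
    |>.trans_isBigO (hl.isBigO_rpow_mul_norm_sq_predictedReduction)
  ring

include hq in
theorem isLittleO_actualReduction_sub_predictedReduction :
    (fun k => actualReduction f φ (run.x k) (run.trial k)
      - predictedReduction f φ (run.x k) (run.trial k))
      =o[l] fun k => predictedReduction f φ (run.x k) (run.trial k) := by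
  have hd := hl.isBigO_d h hq
  have hcubic := ((isBigO_sub_quadratic (h.contDiff.differentiable two_ne_zero)
    (h.contDiff_gradient.differentiable one_ne_zero) h.lipschitz_hessian).comp_tendsto
    (hl.tendsto.prodMk_nhds (hl.tendsto_of_isBigO_sub h hq hd))).neg_left
  have hdδ : (fun k => ‖run.d k‖) =o[l] fun k => run.r k ^ p.δ :=
    hd.norm_left.trans_isLittleO (isLittleO_rpow_rpow_of_lt (hl.tendsto_r h) hq)
  have hcube : (fun k => ‖run.d k‖ ^ 3) =o[l] fun k => run.r k ^ p.δ * ‖run.d k‖ ^ 2 :=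
    (hdδ.mul_isBigO (isBigO_refl (fun k => ‖run.d k‖ ^ 2) l)).congr_left fun k => by ring
  refine ((hcubic.trans_isLittleO hcube).trans_isBigO
    hl.isBigO_rpow_mul_norm_sq_predictedReduction).congr_left fun k => ?_
  simp only [Function.comp_apply, actualReduction, predictedReduction, quadModel]
  ring

include hq in
theorem eventually_not_rejects : ∀ᶠ k in l, ¬p.Rejects f φ (run.x k) (run.trial k) := by
  filter_upwards [hl.eventually_predictedReduction_pos h hq,
    ((hl.isLittleO_norm_mul_min_predictedReduction h hq).const_mul_left
      (p.pmin * (1 - p.θ))).def one_half_pos,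
    (hl.isLittleO_actualReduction_sub_predictedReduction h hq).def
      (half_pos (sub_pos.2 p.c₁_lt_one))] with k hpos hsmall hratio
  rw [Real.norm_of_nonneg hpos.le, Real.norm_eq_abs] at hsmall hratio
  rintro (hrej | hrej)
  · rw [mul_assoc] at hrej
    exact absurd (hrej.trans ((le_abs_self _).trans hsmall)) (by linarith)
  · rw [div_le_iff₀ hpos] at hrej
    have hgap := mul_pos (sub_pos.2 p.c₁_lt_one) hpos
    linarith [neg_le_of_abs_le hratio]

include hq in
theorem eventually_x_succ_eq_trial : ∀ᶠ k in l, run.x (k + 1) = run.trial k :=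
  (hl.eventually_not_rejects h hq).mono fun k hk => (run.succ_of_not_rejects k hk).1

include hq in
theorem isBigO_x_succ_sub : (fun k => run.x (k + 1) - run.x k) =O[l] fun k => run.r k ^ q :=
  (hl.isBigO_d h hq).congr' ((hl.eventually_x_succ_eq_trial h hq).mono fun k hk => by
    simp only [hk, d]) .rfl

include hq in
theorem isBigO_r_succ :
    (fun k => run.r (k + 1)) =O[l] fun k => run.r k ^ min (1 + p.τ) (p.δ + q) :=
  (hl.isBigO_resid_trial h hq).norm_left.congr'
    ((hl.eventually_x_succ_eq_trial h hq).mono fun k hk => by simp only [r, hk]) .rfl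

include hq in
theorem isLittleO_r_succ (hq' : 1 < p.δ + q) : (fun k => run.r (k + 1)) =o[l] run.r := by
  simpa only [Real.rpow_one] using (hl.isBigO_r_succ h hq).trans_isLittleO
    (isLittleO_rpow_rpow_of_lt (hl.tendsto_r h) (p.one_lt_order hq'))

include hq in
theorem eventually_succ_mem_K (hq' : 1 < p.δ + q) : ∀ᶠ k in l, k + 1 ∈ run.K := by
  filter_upwards [hl.eventually_mem_K, (hl.isLittleO_r_succ h hq hq').def p.η_pos] with k hk hr
  rw [run.succ_mem_K, run.rbar_eq_r hk]
  rwa [Real.norm_of_nonneg (run.r_pos _).le, Real.norm_of_nonneg (run.r_pos k).le] at hr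

end Approaches

end Run

theorem stmt_18_general {p : Params} {f φ : EuclideanSpace ℝ (Fin n) → ℝ} (run : Run p f φ)
    {S : Set (EuclideanSpace ℝ (Fin n))} {a : EuclideanSpace ℝ (Fin n)} {q : ℝ}
    (h : LocalAssumptions f φ S a q) (hq : max p.δ (1 - p.δ) < q)
    (hacc : MapClusterPt a (atTop ⊓ 𝓟 run.K) run.x)
    (hshift : run.shift =O[comap run.x (𝓝 a)] fun k => infDist (run.x k) S) :
    Tendsto run.x atTop (𝓝 a) ∧ 1 < min (1 + p.τ) (p.δ + q) ∧
      Tendsto run.r atTop (𝓝 0) ∧ ∃ C > (0 : ℝ), ∃ k₀ : ℕ, ∀ k ≥ k₀,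
        run.r (k + 1) ≤ C * run.r k ^ min (1 + p.τ) (p.δ + q) := by
  obtain ⟨hδq, h1δq⟩ := max_lt_iff.1 hq
  have horder := p.one_lt_order (q := q) (by linarith)
  have happroaches {l : Filter ℕ} (hl : l ≤ comap run.x (𝓝 a) ⊓ 𝓟 run.K) :
      run.Approaches S a l :=
    ⟨tendsto_comap.mono_left (hl.trans inf_le_left),
      eventually_inf_principal.2 (.of_forall fun _ => id) |>.filter_mono hl,
      hshift.mono (hl.trans inf_le_left)⟩
  have hl := happroaches le_rfl
  have hne : (comap run.x (𝓝 a) ⊓ 𝓟 run.K).NeBot :=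
    (neBot_inf_comap_iff_map'.2 hacc).mono (inf_le_inf_left _ inf_le_right)
  have htop : run.Approaches S a atTop := happroaches <|
    atTop_le_comap_nhds_inf_principal (fun k => Real.rpow_nonneg (run.r_pos k).le q)
      (hl.tendsto_r_rpow h (p.δ_pos.trans hδq)) (hl.eventually_succ_mem_K h hδq (by linarith))
      (by simpa only [dist_eq_norm] using (hl.isBigO_x_succ_sub h hδq).norm_left)
      ((hl.isLittleO_r_succ h hδq (by linarith)).rpow (p.δ_pos.trans hδq)
        (.of_forall fun k => (run.r_pos k).le))
  refine ⟨htop.tendsto, horder, tendsto_nhds_of_tendsto_nhdsWithin (htop.tendsto_r h), ?_⟩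
  obtain ⟨C, hC, hbound⟩ := (htop.isBigO_r_succ h hδq).exists_pos
  obtain ⟨k₀, hk₀⟩ := eventually_atTop.1 hbound.bound
  refine ⟨C, hC, k₀, fun k hk => ?_⟩
  have hr := hk₀ k hk
  rwa [Real.norm_of_nonneg (run.r_pos _).le,
    Real.norm_of_nonneg (Real.rpow_nonneg (run.r_pos k).le _)] at hr

end Run

section LambdaMin

variable {m : ℕ} {T T' : EuclideanSpace ℝ (Fin m) →L[ℝ] EuclideanSpace ℝ (Fin m)}

theorem neg_norm_le_inner_of_norm_eq_one {v : EuclideanSpace ℝ (Fin m)} (hv : ‖v‖ = 1) :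
    -‖T‖ ≤ ⟪T v, v⟫ := by
  simpa [ContinuousLinearMap.rayleighQuotient, ContinuousLinearMap.reApplyInnerSelf_apply, hv] using
    neg_le_of_abs_le (T.rayleighQuotient_le_norm v)

theorem lambdaMin_mul_norm_sq_le (u : EuclideanSpace ℝ (Fin m)) :
    lambdaMin T * ‖u‖ ^ 2 ≤ ⟪T u, u⟫ := by
  rcases eq_or_ne u 0 with rfl | hu
  · simp
  have hbdd : BddBelow (Set.range fun v : {v : EuclideanSpace ℝ (Fin m) // ‖v‖ = 1} =>
      ⟪T v.1, v.1⟫) :=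
    ⟨-‖T‖, Set.forall_mem_range.2 fun v => neg_norm_le_inner_of_norm_eq_one v.2⟩
  have hunit := ciInf_le hbdd ⟨‖u‖⁻¹ • u, norm_smul_inv_norm hu⟩
  rw [← lambdaMin] at hunit
  calc lambdaMin T * ‖u‖ ^ 2 ≤ ⟪T (‖u‖⁻¹ • u), ‖u‖⁻¹ • u⟫ * ‖u‖ ^ 2 := by gcongr
    _ = ⟪T u, u⟫ := by
        rw [map_smul, real_inner_smul_left, real_inner_smul_right]
        field_simp [norm_ne_zero_iff.2 hu]

theorem neg_lambdaMin_le_norm_sub (hT' : ∀ u, 0 ≤ ⟪T' u, u⟫) : -lambdaMin T ≤ ‖T - T'‖ := by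
  rw [lambdaMin, neg_le]
  rcases isEmpty_or_nonempty {u : EuclideanSpace ℝ (Fin m) // ‖u‖ = 1} with hempty | hne
  · rw [Real.iInf_of_isEmpty]
    exact neg_nonpos.2 (norm_nonneg _)
  · refine le_ciInf fun v => (neg_norm_le_inner_of_norm_eq_one v.2).trans ?_
    rw [sub_apply, inner_sub_left]
    exact sub_le_self _ (hT' _)

end LambdaMin

section Composite

variable {E F : Type*} [NormedAddCommGroup E] [InnerProductSpace ℝ E] [CompleteSpace E]
  [NormedAddCommGroup F] [InnerProductSpace ℝ F] [CompleteSpace F]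
  {ψ : F → ℝ} {A : E →L[ℝ] F} {b : F}

theorem gradient_comp_sub (hψ : Differentiable ℝ ψ) :
    gradient (fun y => ψ (A y - b)) = fun y => A.adjoint (gradient ψ (A y - b)) := by
  refine gradient_eq fun y => ?_
  refine hasGradientAt_iff_hasFDerivAt.2 (((hψ (A y - b)).hasGradientAt.hasFDerivAt.comp y
    (A.hasFDerivAt.sub_const b)).congr_fderiv ?_)
  ext v
  simp [ContinuousLinearMap.adjoint_inner_left]

theorem fderiv_gradient_comp_sub (hψ : ContDiff ℝ 2 ψ) (y : E) :
    fderiv ℝ (gradient fun y => ψ (A y - b)) y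
      = A.adjoint ∘L fderiv ℝ (gradient ψ) (A y - b) ∘L A := by
  have hgrad : Differentiable ℝ (gradient ψ) :=
    (contDiff_gradient (k := 1) (by rwa [one_add_one_eq_two])).differentiable one_ne_zero
  rw [gradient_comp_sub (hψ.differentiable two_ne_zero)]
  exact (A.adjoint.hasFDerivAt.comp y
    ((hgrad (A y - b)).hasFDerivAt.comp y (A.hasFDerivAt.sub_const b))).fderiv

theorem norm_adjoint_comp_comp_le (T : F →L[ℝ] F) :
    ‖A.adjoint ∘L T ∘L A‖ ≤ ‖A‖ ^ 2 * ‖T‖ :=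
  calc ‖A.adjoint ∘L T ∘L A‖ ≤ ‖A.adjoint‖ * (‖T‖ * ‖A‖) :=
        (ContinuousLinearMap.opNorm_comp_le _ _).trans
          (by gcongr; exact ContinuousLinearMap.opNorm_comp_le _ _)
    _ = ‖A‖ ^ 2 * ‖T‖ := by rw [LinearIsometryEquiv.norm_map]; ring

theorem lipschitzOnWith_fderiv_gradient_comp_sub (hψ : ContDiff ℝ 2 ψ) {s : Set E} {L : ℝ≥0}
    (hL : ∀ u ∈ s, ∀ v ∈ s, ‖fderiv ℝ (gradient ψ) (A u - b) - fderiv ℝ (gradient ψ) (A v - b)‖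
      ≤ L * ‖A u - A v‖) :
    LipschitzOnWith (‖A‖₊ ^ 3 * L) (fderiv ℝ (gradient fun y => ψ (A y - b))) s := by
  refine lipschitzOnWith_iff_norm_sub_le.2 fun u hu v hv => ?_
  rw [fderiv_gradient_comp_sub hψ, fderiv_gradient_comp_sub hψ, ← ContinuousLinearMap.comp_sub,
    ← ContinuousLinearMap.sub_comp]
  calc _ ≤ ‖A‖ ^ 2 * ‖fderiv ℝ (gradient ψ) (A u - b) - fderiv ℝ (gradient ψ) (A v - b)‖ :=
        norm_adjoint_comp_comp_le _
    _ ≤ ‖A‖ ^ 2 * (L * (‖A‖ * ‖u - v‖)) := by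
        grw [hL u hu v hv, ← map_sub, A.le_opNorm]
    _ = (‖A‖₊ ^ 3 * L : ℝ≥0) * ‖u - v‖ := by push_cast; ring

end Composite

section CurvatureShift

variable {n m : ℕ} {ψ : EuclideanSpace ℝ (Fin m) → ℝ}
  {A : EuclideanSpace ℝ (Fin n) →L[ℝ] EuclideanSpace ℝ (Fin m)} {b : EuclideanSpace ℝ (Fin m)}
  {c : ℝ}

/-- The compensation `Λ AᵀA` of the negative curvature of `y ↦ ψ (A y - b)` at `y`, where
`Λ = c [-λ_min(∇²ψ(A y - b))]₊`. -/
def curvatureShift (ψ : EuclideanSpace ℝ (Fin m) → ℝ)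
    (A : EuclideanSpace ℝ (Fin n) →L[ℝ] EuclideanSpace ℝ (Fin m)) (b : EuclideanSpace ℝ (Fin m))
    (c : ℝ) (y : EuclideanSpace ℝ (Fin n)) :
    EuclideanSpace ℝ (Fin n) →L[ℝ] EuclideanSpace ℝ (Fin n) :=
  (c * max (-lambdaMin (fderiv ℝ (gradient ψ) (A y - b))) 0) • A.adjoint.comp A

theorem inner_curvatureShift_apply_self (y v : EuclideanSpace ℝ (Fin n)) :
    ⟪curvatureShift ψ A b c y v, v⟫
      = c * max (-lambdaMin (fderiv ℝ (gradient ψ) (A y - b))) 0 * ‖A v‖ ^ 2 := by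
  rw [curvatureShift, smul_apply, real_inner_smul_left, ContinuousLinearMap.comp_apply,
    ContinuousLinearMap.adjoint_inner_left, real_inner_self_eq_norm_sq]

theorem inner_curvatureShift_nonneg (hc : 0 ≤ c) (y v : EuclideanSpace ℝ (Fin n)) :
    0 ≤ ⟪curvatureShift ψ A b c y v, v⟫ := by
  rw [inner_curvatureShift_apply_self]
  positivity

theorem inner_hessian_add_curvatureShift_nonneg (hψ : ContDiff ℝ 2 ψ) (hc : 1 ≤ c)
    (y v : EuclideanSpace ℝ (Fin n)) :
    0 ≤ ⟪(fderiv ℝ (gradient fun y => ψ (A y - b)) y + curvatureShift ψ A b c y) v, v⟫ := by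
  rw [add_apply, inner_add_left, inner_curvatureShift_apply_self, fderiv_gradient_comp_sub hψ,
    ContinuousLinearMap.comp_apply, ContinuousLinearMap.adjoint_inner_left]
  set T := fderiv ℝ (gradient ψ) (A y - b)
  have hT : lambdaMin T * ‖A v‖ ^ 2 ≤ ⟪T (A v), A v⟫ := lambdaMin_mul_norm_sq_le _
  have hmax : -lambdaMin T ≤ c * max (-lambdaMin T) 0 :=
    (le_max_left _ _).trans (le_mul_of_one_le_left (le_max_right _ _) hc)
  have hcompensate := mul_le_mul_of_nonneg_right hmax (sq_nonneg ‖A v‖)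
  rw [ContinuousLinearMap.comp_apply]
  linarith

theorem isBigO_curvatureShift_infDist (hc : 0 ≤ c) {S s : Set (EuclideanSpace ℝ (Fin n))}
    {a : EuclideanSpace ℝ (Fin n)} {L : ℝ≥0} (ha : a ∈ S) (hs : s ∈ 𝓝 a)
    (hL : ∀ u ∈ s, ∀ v ∈ s, ‖fderiv ℝ (gradient ψ) (A u - b) - fderiv ℝ (gradient ψ) (A v - b)‖
      ≤ L * ‖A u - A v‖)
    (hpsd : ∀ y ∈ S, ∀ u, 0 ≤ ⟪fderiv ℝ (gradient ψ) (A y - b) u, u⟫) :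
    curvatureShift ψ A b c =O[𝓝 a] fun y => infDist y S := by
  refine isBigO_infDist_of_isBigO_dist ha (.of_bound (c * (L * ‖A‖) * ‖A‖ ^ 2) ?_)
  filter_upwards [prod_mem_prod hs (inter_mem self_mem_nhdsWithin (mem_nhdsWithin_of_mem_nhds hs))]
    with p ⟨h₁, hpS, h₂⟩
  have hmax : max (-lambdaMin (fderiv ℝ (gradient ψ) (A p.1 - b))) 0
      ≤ L * ‖A‖ * dist p.1 p.2 := by
    refine max_le ((neg_lambdaMin_le_norm_sub (hpsd _ hpS)).trans ?_) (by positivity)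
    grw [hL _ h₁ _ h₂, ← map_sub, A.le_opNorm, dist_eq_norm, mul_assoc]
  calc ‖curvatureShift ψ A b c p.1‖
      = c * max (-lambdaMin (fderiv ℝ (gradient ψ) (A p.1 - b))) 0 * ‖A‖ ^ 2 := by
        rw [curvatureShift, norm_smul, ContinuousLinearMap.norm_adjoint_comp_self, pow_two,
          Real.norm_of_nonneg (by positivity)]
    _ ≤ c * (L * ‖A‖ * dist p.1 p.2) * ‖A‖ ^ 2 := by gcongr
    _ = c * (L * ‖A‖) * ‖A‖ ^ 2 * ‖dist p.1 p.2‖ := by rw [Real.norm_of_nonneg dist_nonneg]; ring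

end CurvatureShift

theorem mem_Icc_of_eq_min_or_eq_min_max {t lo hi ν ν' : ℝ} (hlohi : lo ≤ hi)
    (h : ν' = min ν hi ∨ ν' = min (max t lo) hi) : ν' ∈ Set.Icc (min ν lo) hi := by
  rcases h with rfl | rfl
  · exact ⟨min_le_min_left ν hlohi, min_le_right _ _⟩
  · exact ⟨(min_le_right ν lo).trans (le_min (le_max_right _ _) hlohi), min_le_right _ _⟩

theorem localAssumptions_comp_sub {n m : ℕ} {ψ : EuclideanSpace ℝ (Fin m) → ℝ}
    {φ : EuclideanSpace ℝ (Fin n) → ℝ} {A : EuclideanSpace ℝ (Fin n) →L[ℝ] EuclideanSpace ℝ (Fin m)}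
    {b : EuclideanSpace ℝ (Fin m)} (hψ : ContDiff ℝ 2 ψ) (hφ : ConvexOn ℝ Set.univ φ)
    {S s : Set (EuclideanSpace ℝ (Fin n))} {a : EuclideanSpace ℝ (Fin n)} (ha : a ∈ S)
    (hs : s ∈ 𝓝 a) (hS : ∀ y ∈ S, -gradient (fun y => ψ (A y - b)) y ∈ subdiff φ y) {L : ℝ≥0}
    (hL : ∀ u ∈ s, ∀ v ∈ s, ‖fderiv ℝ (gradient ψ) (A u - b) - fderiv ℝ (gradient ψ) (A v - b)‖
      ≤ L * ‖A u - A v‖) {β q : ℝ} (hβ : 0 < β)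
    (herr : ∀ y ∈ s, β * infDist y S ≤ ‖resid (fun y => ψ (A y - b)) φ y‖ ^ q) :
    LocalAssumptions (fun y => ψ (A y - b)) φ S a q where
  convexOn := hφ
  contDiff := hψ.comp (A.contDiff.sub contDiff_const)
  lipschitz_hessian := ⟨_, s, hs, lipschitzOnWith_fderiv_gradient_comp_sub hψ hL⟩
  stationary := hS
  mem := ha
  error_bound := by
    refine .of_bound β⁻¹ ?_
    filter_upwards [hs] with y hy
    rw [Real.norm_of_nonneg infDist_nonneg, le_inv_mul_iff₀ hβ]
    exact (herr y hy).trans (le_abs_self _)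

/-- Theorem 5.7 (local convergence): under the local assumptions, the whole sequence `{xᵏ}`
converges to `x*`, and `{‖r(xᵏ)‖}` converges to `0` with convergence order
`ρ = min{1+τ, δ+q} > 1`: there exist `C > 0` and `k₀` with
`‖r(x^{k+1})‖ ≤ C‖r(xᵏ)‖^ρ` for all `k ≥ k₀`. -/
theorem stmt_18 {n m : ℕ}
    -- problem data: f(x) = ψ(Ax − b), F = f + φ bounded below, φ convex, ψ C²
    (ψ : EuclideanSpace ℝ (Fin m) → ℝ)
    (A : EuclideanSpace ℝ (Fin n) →L[ℝ] EuclideanSpace ℝ (Fin m))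
    (b : EuclideanSpace ℝ (Fin m))
    (φ : EuclideanSpace ℝ (Fin n) → ℝ)
    (hψ : ContDiff ℝ 2 ψ) (hφ : ConvexOn ℝ Set.univ φ)
    (f F : EuclideanSpace ℝ (Fin n) → ℝ)
    (hf : ∀ y, f y = ψ (A y - b)) (hF : ∀ y, F y = f y + φ y)
    (hFbdd : BddBelow (Set.range F))
    -- algorithm parameters
    (c₁ c₂ σ₁ σ₂ η θ α a νmin ν₀ νbar δ τ pmin κ : ℝ)
    (hc₁ : 0 < c₁) (hc₁' : c₁ < 1) (hc₂ : c₁ < c₂) (hc₂' : c₂ < 1)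
    (hσ₁ : 0 < σ₁) (hσ₁' : σ₁ < 1) (hσ₂ : 1 < σ₂)
    (hη : 0 < η) (hη' : η < 1) (hθ : 0 < θ) (hθ' : θ < 1)
    (hα : 0 < α) (hα' : α < 1) (ha : 1 ≤ a)
    (hνmin : 0 < νmin) (hν₀a : νmin ≤ ν₀) (hν₀b : ν₀ ≤ νbar)
    (hδ0 : 0 < δ) (hδ1 : δ ≤ 1) (hτ : δ ≤ τ)
    (hpmin : 0 < pmin) (hpmin' : pmin < 1 / 2) (hκ : 1 + δ < κ)
    -- iterates and regularization sequences
    (x xhat : ℕ → EuclideanSpace ℝ (Fin n)) (ν rbar μ : ℕ → ℝ)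
    (hν0 : ν 0 = ν₀) (hrbar0 : rbar 0 = ‖resid f φ (x 0)‖)
    (hμ : ∀ k, μ k = ν k * rbar k ^ δ)
    -- Λ_k, H_k + μ_k I =: G_k, the models q_k, q̂_k, and the subproblem residual R_k
    (Λ : ℕ → ℝ)
    (hΛ : ∀ k, Λ k = a * max (-(lambdaMin (fderiv ℝ (gradient ψ) (A (x k) - b)))) 0)
    (G : ℕ → EuclideanSpace ℝ (Fin n) →L[ℝ] EuclideanSpace ℝ (Fin n))
    (hG : ∀ k, G k = fderiv ℝ (gradient f) (x k)
        + Λ k • ((ContinuousLinearMap.adjoint A).comp A)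
        + μ k • ContinuousLinearMap.id ℝ (EuclideanSpace ℝ (Fin n)))
    (q qhat : ℕ → EuclideanSpace ℝ (Fin n) → ℝ)
    (hq : ∀ k y, q k y = f (x k) + ⟪gradient f (x k), y - x k⟫
        + (1 / 2) * ⟪y - x k, (fderiv ℝ (gradient f) (x k)) (y - x k)⟫ + φ y)
    (hqhat : ∀ k y, qhat k y = f (x k) + ⟪gradient f (x k), y - x k⟫
        + (1 / 2) * ⟪y - x k, (G k) (y - x k)⟫ + φ y)
    (R : ℕ → EuclideanSpace ℝ (Fin n) → EuclideanSpace ℝ (Fin n))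
    (hR : ∀ k y, R k y = y - proxPt φ (y - gradient f (x k) - (G k) (y - x k)))
    -- the inexactness criteria satisfied by x̂ᵏ
    (hinex1 : ∀ k, ‖R k (xhat k)‖ ≤
        θ * min ‖resid f φ (x k)‖ (‖resid f φ (x k)‖ ^ (1 + τ)))
    (hinex2 : ∀ k, α * μ k / 2 * ‖xhat k - x k‖ ^ 2 ≤ F (x k) - qhat k (xhat k))
    -- dᵏ, pred_k, ared_k, ρ_k
    (d : ℕ → EuclideanSpace ℝ (Fin n)) (hd : ∀ k, d k = xhat k - x k)
    (pred ared ρ : ℕ → ℝ)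
    (hpred : ∀ k, pred k = F (x k) - q k (xhat k))
    (hared : ∀ k, ared k = F (x k) - F (xhat k))
    (hρ : ∀ k, ρ k = ared k / pred k)
    -- update rules (unsuccessful / successful / highly successful iterations)
    (unsucc : ℕ → Prop)
    (hunsucc : ∀ k, unsucc k ↔
        pred k ≤ pmin * (1 - θ) * ‖d k‖ *
          min ‖resid f φ (x k)‖ (‖resid f φ (x k)‖ ^ κ) ∨ ρ k ≤ c₁)
    (hupd : ∀ k,
        (unsucc k → x (k + 1) = x k ∧ ν (k + 1) = σ₂ * ν k) ∧
        (¬unsucc k → x (k + 1) = xhat k ∧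
          (ρ k ≤ c₂ → ν (k + 1) = min (ν k) νbar) ∧
          (c₂ < ρ k → ν (k + 1) = min (max (σ₁ * ν k) νmin) νbar)))
    (hrbarupd : ∀ k,
        (‖resid f φ (x (k + 1))‖ ≤ η * rbar k → rbar (k + 1) = ‖resid f φ (x (k + 1))‖) ∧
        (¬‖resid f φ (x (k + 1))‖ ≤ η * rbar k → rbar (k + 1) = rbar k))
    -- no iterate is stationary (otherwise the algorithm terminates)
    (hrne : ∀ k, resid f φ (x k) ≠ 0)
    -- the index set K
    (K : Set ℕ)
    (hK : K = {0} ∪ {k | 1 ≤ k ∧ ‖resid f φ (x k)‖ ≤ η * rbar (k - 1)})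
    -- local assumptions: X* = set of strongly stationary points, x* an accumulation
    -- point of {xᵏ}_{k∈K} lying in X*
    (Xstar : Set (EuclideanSpace ℝ (Fin n)))
    (hXstar : Xstar = {y | -gradient f y ∈ subdiff φ y ∧
        ∀ u, 0 ≤ ⟪(fderiv ℝ (gradient ψ) (A y - b)) u, u⟫})
    (hXne : Xstar.Nonempty)
    (xstar : EuclideanSpace ℝ (Fin n)) (hxstar : xstar ∈ Xstar)
    (hacc : MapClusterPt xstar (atTop ⊓ 𝓟 K) x)
    -- local Lipschitz continuity of ∇²ψ near x*
    (ε Lψ : ℝ) (hε : 0 < ε) (hLψ : 0 < Lψ)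
    (hlipψ : ∀ u ∈ closedBall xstar ε, ∀ v ∈ closedBall xstar ε,
      ‖fderiv ℝ (gradient ψ) (A u - b) - fderiv ℝ (gradient ψ) (A v - b)‖ ≤ Lψ * ‖A u - A v‖)
    -- Hölderian local error bound of order qq on X*
    (β qq : ℝ) (hβ : 0 < β) (hqq : max δ (1 - δ) < qq)
    (herrbd : ∀ y ∈ closedBall xstar ε, β * infDist y Xstar ≤ ‖resid f φ y‖ ^ qq)
    -- derived constants: ε₀, L = ‖A‖³Lψ, and a Lipschitz constant L_g of ∇f on B_{ε₀}(x*)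
    (ε₀ L Lg : ℝ) (hε₀ : ε₀ = min ε (ε / ‖A‖)) (hL : L = ‖A‖ ^ 3 * Lψ) (hLg : 0 < Lg)
    (hlipg : ∀ u ∈ closedBall xstar ε₀, ∀ v ∈ closedBall xstar ε₀,
      ‖gradient f u - gradient f v‖ ≤ Lg * ‖u - v‖)
    :
    Tendsto x atTop (nhds xstar) ∧
    1 < min (1 + τ) (δ + qq) ∧
    Tendsto (fun k => ‖resid f φ (x k)‖) atTop (nhds 0) ∧
    ∃ C > (0 : ℝ), ∃ k₀ : ℕ, ∀ k ≥ k₀,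
      ‖resid f φ (x (k + 1))‖ ≤ C * ‖resid f φ (x k)‖ ^ min (1 + τ) (δ + qq) := by
  obtain rfl : f = fun y => ψ (A y - b) := funext hf
  obtain ⟨rfl, rfl, rfl, rfl, rfl, rfl, rfl⟩ :=
    (⟨funext hF, funext hΛ, funext hμ, funext hG, funext₂ hq, funext₂ hqhat, funext₂ hR⟩ :
      _ ∧ _ ∧ _ ∧ _ ∧ _ ∧ _ ∧ _)
  obtain ⟨rfl, rfl, rfl, rfl⟩ :=
    (⟨funext hd, funext hpred, funext hared, funext hρ⟩ : _ ∧ _ ∧ _ ∧ _)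
  subst hXstar hK hν0
  let p : Params := ⟨c₁, η, θ, α, νmin, νbar, δ, τ, pmin, κ,
    hc₁', hη, hη', hθ.le, hθ', hα.le, hνmin, hδ0, hτ, hκ⟩
  let run : Run p (fun y => ψ (A y - b)) φ :=
    { x, trial := xhat, shift := fun k => curvatureShift ψ A b a (x k), ν, rbar
      resid_ne_zero := hrne
      shift_nonneg := fun k => inner_curvatureShift_nonneg (zero_le_one.trans ha) (x k)
      hessian_add_shift_nonneg := fun k => inner_hessian_add_curvatureShift_nonneg hψ ha (x k)
      norm_modelResid_le := hinex1
      mul_norm_sq_le_sub_quadModel := hinex2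
      succ_of_rejects := fun k hk =>
        ((hupd k).1 ((hunsucc k).2 hk)).imp_right fun hν => ⟨σ₂, hσ₂.le, hν⟩
      succ_of_not_rejects := fun k hk => ((hupd k).2 (mt (hunsucc k).1 hk)).imp_right fun hν =>
        mem_Icc_of_eq_min_or_eq_min_max (hν₀a.trans hν₀b) ((le_or_gt _ c₂).imp hν.1 hν.2)
      ν_zero_mem := ⟨hν₀a, hν₀b⟩
      rbar_zero := hrbar0
      rbar_succ := hrbarupd }
  have hs := closedBall_mem_nhds xstar hε
  lift Lψ to ℝ≥0 using hLψ.le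
  exact stmt_18_general run
    (localAssumptions_comp_sub hψ hφ hxstar hs (fun y hy => hy.1) hlipψ hβ herrbd) hqq hacc
    ((isBigO_curvatureShift_infDist (zero_le_one.trans ha) hxstar hs hlipψ
      fun y hy => hy.2).comp_tendsto tendsto_comap)
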